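/- arXiv:math/9201303 — 2 statements merged into one kernel-verified Lean document; each statement's English description precedes it below -/
import Mathlib

section
/- Fix a constant $\epsilon$ with $0 < \epsilon < 1$. For each $m \geq 1$ let $B_1, \ldots, B_m$ be independent Bernoulli random variables with $\Pr(B_k = 1) = 1/k$, and set $X = B_1 + \cdots + B_m$. Then there is a constant $K > 0$ such that for all $m \geq 2$, $\Pr\bigl(X < (1 - \epsilon) \ln m\bigr) \leq K\, m^{-\epsilon^2/2}$. -/
open MeasureTheory ProbabilityTheory

lemma aux_log (ε : ℝ) (hε0 : 0 < ε) (hε1 : ε < 1) :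
    -((1 - ε) * Real.log (1 - ε)) - ε ≤ -(ε ^ 2 / 2) := by
  have hz : 0 < 1 - ε := by linarith
  have h1 : 0 ≤ -Real.log (1 - ε) := by
    have := Real.log_nonpos hz.le (by linarith)
    linarith
  have h2 := Real.self_le_sinh_iff.2 h1
  rw [Real.sinh_eq, neg_neg, Real.exp_neg, Real.exp_log hz] at h2
  have h3 := mul_le_mul_of_nonneg_left h2 hz.le
  have h4 : (1 - ε) * (((1 - ε)⁻¹ - (1 - ε)) / 2) = (1 - (1 - ε) ^ 2) / 2 := by
    field_simp
  rw [h4] at h3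
  nlinarith

lemma aux_mgf {Ω : Type*} [MeasurableSpace Ω] (μ : Measure Ω) [IsProbabilityMeasure μ]
    (b : Ω → Bool) (hb : Measurable b) (t : ℝ) :
    mgf (fun ω => if b ω then (1 : ℝ) else 0) μ t
      = 1 + (Real.exp t - 1) * (μ {ω | b ω = true}).toReal := by
  have hs : MeasurableSet {ω | b ω = true} := hb (measurableSet_singleton true)
  have : (fun ω => Real.exp (t * (if b ω then (1 : ℝ) else 0)))
      = fun ω => 1 + (Real.exp t - 1) * ({ω | b ω = true}.indicator (fun _ => (1 : ℝ)) ω) := by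
    funext ω
    by_cases h : b ω = true <;> simp [h]
  have hi : Integrable ({ω | b ω = true}.indicator (fun _ => (1 : ℝ))) μ :=
    (integrable_const _).indicator hs
  rw [mgf, this, integral_add (integrable_const _) (hi.const_mul _), integral_const_mul,
    integral_indicator hs]
  simp [Measure.real]

/-- **Lemma 10, first estimate.** Fix `0 < ε < 1`.  For each `m` let
`B 1, …, B m` be independent Bernoulli random variables with `Pr(B k = 1) = 1/k`
and let `X = B 1 + ⋯ + B m`.  Then there is a constant `K > 0` such that for all
`m ≥ 2`, `Pr(X < (1 - ε) ln m) ≤ K m^(-ε²/2)`. -/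
theorem lemma10_first_estimate
    (ε : ℝ) (hε0 : 0 < ε) (hε1 : ε < 1)
    (Ω : ℕ → Type*) [∀ m, MeasurableSpace (Ω m)]
    (μ : ∀ m, Measure (Ω m)) [∀ m, IsProbabilityMeasure (μ m)]
    (B : ∀ m, Fin m → Ω m → Bool)
    (hmeas : ∀ m k, Measurable (B m k))
    (hindep : ∀ m, iIndepFun (B m) (μ m))
    (hbern : ∀ m, ∀ k : Fin m, ((μ m) {ω | B m k ω = true}).toReal = 1 / ((k : ℕ) + 1)) :
    ∃ K : ℝ, 0 < K ∧ ∀ m : ℕ, 2 ≤ m →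
      ((μ m) {ω | ((∑ k : Fin m, if B m k ω then 1 else 0 : ℕ) : ℝ) <
          (1 - ε) * Real.log m}).toReal ≤ K * (m : ℝ) ^ (-(ε ^ 2 / 2)) := by
  refine ⟨1, one_pos, fun m hm => ?_⟩
  have hz : 0 < 1 - ε := by linarith
  have hm0 : (0 : ℝ) < m := by exact_mod_cast (by omega : 0 < m)
  set L := Real.log m with hL
  set t := Real.log (1 - ε) with ht
  have htn : t ≤ 0 := Real.log_nonpos hz.le (by linarith)
  let X : Fin m → Ω m → ℝ := fun k ω => if B m k ω then 1 else 0
  have hXm : ∀ k, Measurable (X k) := fun k =>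
    (measurable_of_countable (fun b : Bool => if b then (1 : ℝ) else 0)).comp (hmeas m k)
  have hXi : iIndepFun X (μ m) :=
    (hindep m).comp (fun _ (b : Bool) => if b then (1 : ℝ) else 0)
      (fun _ => measurable_of_countable _)
  have hint : Integrable (fun ω => Real.exp (t * (∑ k, X k) ω)) (μ m) := by
    refine hXi.integrable_exp_mul_sum hXm (fun k _ => ?_)
    refine integrable_exp_mul_of_mem_Icc (a := 0) (b := 1) (hXm k).aemeasurable
      (ae_of_all _ fun ω => ?_)
    by_cases h : B m k ω = true <;> simp [X, h]
  have hch := measure_le_le_exp_mul_mgf (μ := μ m) (X := ∑ k, X k) ((1 - ε) * L) htn hint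
  rw [hXi.mgf_sum hXm] at hch
  have hprod : ∏ k, mgf (X k) (μ m) t ≤ Real.exp (-ε * L) := by
    have h1 : ∏ k, mgf (X k) (μ m) t
        ≤ ∏ k : Fin m, Real.exp (-ε * (1 / (((k : ℕ) : ℝ) + 1))) := by
      refine Finset.prod_le_prod (fun k _ => mgf_nonneg) (fun k _ => ?_)
      have := aux_mgf (μ m) (B m k) (hmeas m k) t
      rw [hbern m k, ht, Real.exp_log hz] at this
      have h2 := Real.add_one_le_exp (-ε * (1 / (((k : ℕ) : ℝ) + 1)))
      calc mgf (X k) (μ m) t = _ := this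
        _ ≤ _ := by linarith
    refine h1.trans ?_
    rw [← Real.exp_sum, Real.exp_le_exp, ← Finset.mul_sum]
    have h3 := log_add_one_le_harmonic m
    have h4 : ((harmonic m : ℚ) : ℝ) = ∑ k : Fin m, (1 / (((k : ℕ) : ℝ) + 1)) := by
      rw [Fin.sum_univ_eq_sum_range (fun k : ℕ => 1 / ((k : ℝ) + 1))]
      simp [harmonic]
    have h5 : L ≤ Real.log ((m + 1 : ℕ) : ℝ) :=
      Real.log_le_log hm0 (by push_cast; linarith)
    rw [← h4]
    push_cast at h3 h5
    nlinarith
  have hsub : ((μ m) {ω | ((∑ k : Fin m, if B m k ω then 1 else 0 : ℕ) : ℝ) <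
      (1 - ε) * L}).toReal ≤ (μ m).real {ω | (∑ k, X k) ω ≤ (1 - ε) * L} := by
    refine measureReal_mono (fun ω hω => ?_)
    simp only [Set.mem_setOf_eq] at hω ⊢
    push_cast at hω
    simp only [Finset.sum_apply, X]
    exact hω.le
  refine (hsub.trans hch).trans ?_
  rw [one_mul, Real.rpow_def_of_pos hm0]
  refine (mul_le_mul_of_nonneg_left hprod (Real.exp_pos _).le).trans ?_
  rw [← Real.exp_add, Real.exp_le_exp]
  have hL0 : 0 ≤ L := Real.log_nonneg (by exact_mod_cast (by omega : 1 ≤ m))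
  have := mul_le_mul_of_nonneg_right (aux_log ε hε0 hε1) hL0
  rw [← ht] at this
  rw [← hL]
  linarith
end

section
/- For each $m \geq 1$ let $B_1, \ldots, B_m$ be independent Bernoulli random variables with $\Pr(B_k = 1) = 1/k$, and set $X = B_1 + \cdots + B_m$. Then there is a constant $K > 0$ such that for all sufficiently large $m$, $\Pr\bigl(X > m/(\ln m)^3\bigr) \leq K \exp\bigl(-m/(\ln m)^2 + 7 m \,(\ln\ln m)/(\ln m)^3\bigr)$; in particular $\Pr\bigl(X > m/(\ln m)^3\bigr) \to 0$ as $m \to \infty$. -/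
open MeasureTheory ProbabilityTheory Filter

theorem aux_chernoff {Ω : Type*} [MeasurableSpace Ω] (μ : Measure Ω) [IsProbabilityMeasure μ]
    (m : ℕ) (B : Fin m → Ω → Bool) (hmeas : ∀ k, Measurable (B k)) (hindep : iIndepFun B μ)
    (hbern : ∀ k : Fin m, (μ {ω | B k ω = true}).toReal = 1 / ((k : ℕ) + 1))
    (s ε : ℝ) (hs : 0 ≤ s) :
    (μ {ω | ε < ((∑ k : Fin m, if B k ω then 1 else 0 : ℕ) : ℝ)}).toReal ≤
      Real.exp (-s * ε + (Real.exp s - 1) * (1 + Real.log m)) := by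
  set Y : Fin m → Ω → ℝ := fun k ω => if B k ω then 1 else 0 with hY
  have hYm : ∀ k, Measurable (Y k) := fun k =>
    (measurable_from_top (f := fun b : Bool => if b then (1:ℝ) else 0)).comp (hmeas k)
  have hYi : iIndepFun Y μ :=
    hindep.comp (fun _ (b : Bool) => if b then (1:ℝ) else 0) (fun _ => measurable_from_top)
  have hmgf : ∀ k, mgf (Y k) μ s ≤ Real.exp ((Real.exp s - 1) * (1 / ((k : ℕ) + 1))) := by
    intro k
    have hset : MeasurableSet {ω | B k ω = true} := hmeas k (measurableSet_singleton true)
    have h1 : (fun ω => Real.exp (s * Y k ω)) =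
        fun ω => 1 + {ω | B k ω = true}.indicator (fun _ => Real.exp s - 1) ω := by
      funext ω
      by_cases h : B k ω = true <;> simp [hY, h]
    have h2 : mgf (Y k) μ s = 1 + (Real.exp s - 1) * (1 / ((k : ℕ) + 1)) := by
      rw [mgf, h1, integral_add (integrable_const _) ((integrable_const _).indicator hset),
        integral_indicator_const _ hset, measureReal_def, hbern k]
      simp [mul_comm]
    rw [h2, add_comm]
    exact Real.add_one_le_exp _
  have hbd : ∀ ω, (∑ k, Y k) ω = ((∑ k : Fin m, if B k ω then 1 else 0 : ℕ) : ℝ) := by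
    intro ω
    simp [hY]
  have hint : Integrable (fun ω => Real.exp (s * (∑ k, Y k) ω)) μ :=
    hYi.integrable_exp_mul_sum hYm (fun k _ => by
      refine Integrable.of_bound (C := Real.exp s)
        ((hYm k).const_mul s).exp.aestronglyMeasurable (Eventually.of_forall fun ω => ?_)
      rw [Real.norm_eq_abs, Real.abs_exp]
      apply Real.exp_le_exp.2
      by_cases h : B k ω = true <;> simp [hY, h, hs])
  have hC := measure_ge_le_exp_mul_mgf (μ := μ) (X := ∑ k, Y k) ε hs hint
  have hsum : ∑ k : Fin m, (1 / (((k : ℕ) : ℝ) + 1)) ≤ 1 + Real.log m := by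
    have := harmonic_le_one_add_log m
    rw [harmonic] at this
    push_cast at this
    rw [Fin.sum_univ_eq_sum_range (fun k : ℕ => 1 / ((k : ℝ) + 1))]
    simpa using this
  calc (μ {ω | ε < ((∑ k : Fin m, if B k ω then 1 else 0 : ℕ) : ℝ)}).toReal
      ≤ μ.real {ω | ε ≤ (∑ k, Y k) ω} := by
        rw [← measureReal_def]
        apply measureReal_mono
        · intro ω h
          simp only [Set.mem_ofPred_eq] at h ⊢
          rw [hbd]; exact h.le
        · exact measure_ne_top _ _
    _ ≤ _ := hC
    _ ≤ Real.exp (-s * ε) * Real.exp ((Real.exp s - 1) * (1 + Real.log m)) := by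
        apply mul_le_mul_of_nonneg_left _ (Real.exp_pos _).le
        rw [hYi.mgf_sum hYm]
        calc _ ≤ ∏ k : Fin m, Real.exp ((Real.exp s - 1) * (1 / ((k : ℕ) + 1))) :=
              Finset.prod_le_prod (fun _ _ => mgf_nonneg) (fun k _ => hmgf k)
          _ = Real.exp ((Real.exp s - 1) * ∑ k : Fin m, (1 / (((k : ℕ) : ℝ) + 1))) := by
              rw [← Real.exp_sum, Finset.mul_sum]
          _ ≤ _ := by
              apply Real.exp_le_exp.2
              apply mul_le_mul_of_nonneg_left hsum
              linarith [Real.one_le_exp hs]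
    _ = _ := by rw [← Real.exp_add]

theorem aux_pow_log (n : ℕ) :
    Tendsto (fun m : ℕ => (m : ℝ) / (Real.log m) ^ n) atTop atTop := by
  have h := (Real.tendsto_exp_div_pow_atTop n).comp
    (Real.tendsto_log_atTop.comp (tendsto_natCast_atTop_atTop (R := ℝ)))
  refine h.congr' ?_
  filter_upwards [eventually_gt_atTop 0] with m hm
  simp [Real.exp_log (show (0:ℝ) < m by exact_mod_cast hm)]

/-- **Lemma 10, third estimate.** For each `m` let `B 1, …, B m` be independent
Bernoulli random variables with `Pr(B k = 1) = 1/k` and let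
`X = B 1 + ⋯ + B m`.  Then there is a constant `K > 0` such that for all
sufficiently large `m`,
`Pr(X > m/(ln m)³) ≤ K exp(-m/(ln m)² + 7 m (ln ln m)/(ln m)³)`; in particular
`Pr(X > m/(ln m)³) → 0` as `m → ∞`. -/
theorem lemma10_third_estimate
    (Ω : ℕ → Type*) [∀ m, MeasurableSpace (Ω m)]
    (μ : ∀ m, Measure (Ω m)) [∀ m, IsProbabilityMeasure (μ m)]
    (B : ∀ m, Fin m → Ω m → Bool)
    (hmeas : ∀ m k, Measurable (B m k))
    (hindep : ∀ m, iIndepFun (B m) (μ m))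
    (hbern : ∀ m, ∀ k : Fin m, ((μ m) {ω | B m k ω = true}).toReal = 1 / ((k : ℕ) + 1)) :
    (∃ K : ℝ, 0 < K ∧ ∃ m₀ : ℕ, ∀ m : ℕ, m₀ ≤ m →
      ((μ m) {ω | (m : ℝ) / (Real.log m) ^ 3 <
          ((∑ k : Fin m, if B m k ω then 1 else 0 : ℕ) : ℝ)}).toReal ≤
        K * Real.exp (-(m : ℝ) / (Real.log m) ^ 2 +
          7 * m * Real.log (Real.log m) / (Real.log m) ^ 3)) ∧
    Tendsto (fun m : ℕ =>
        ((μ m) {ω | (m : ℝ) / (Real.log m) ^ 3 <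
          ((∑ k : Fin m, if B m k ω then 1 else 0 : ℕ) : ℝ)}).toReal)
      atTop (nhds 0) := by
  have hL : Tendsto (fun m : ℕ => Real.log m) atTop atTop :=
    Real.tendsto_log_atTop.comp (tendsto_natCast_atTop_atTop (R := ℝ))
  have hLL : Tendsto (fun m : ℕ => Real.log (Real.log m)) atTop atTop :=
    Real.tendsto_log_atTop.comp hL
  have key : ∀ᶠ m : ℕ in atTop,
      ((μ m) {ω | (m : ℝ) / (Real.log m) ^ 3 <
          ((∑ k : Fin m, if B m k ω then 1 else 0 : ℕ) : ℝ)}).toReal ≤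
        1 * Real.exp (-(m : ℝ) / (Real.log m) ^ 2 +
          7 * m * Real.log (Real.log m) / (Real.log m) ^ 3) := by
    filter_upwards [eventually_gt_atTop 0, hL.eventually_ge_atTop 1, hLL.eventually_ge_atTop 1,
      (aux_pow_log 4).eventually_ge_atTop 1] with m hm h1 h2 h3
    have hm' : (0:ℝ) < m := by exact_mod_cast hm
    refine (aux_chernoff (μ m) m (B m) (hmeas m) (hindep m) (hbern m)
      (Real.log (m / (Real.log m) ^ 4)) _ (Real.log_nonneg h3)).trans ?_
    rw [one_mul, Real.exp_log (by linarith), Real.exp_le_exp,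
      Real.log_div hm'.ne' (by positivity), Real.log_pow]
    generalize Real.log (m : ℝ) = L at *
    generalize Real.log L = l at *
    have hL0 : 0 < L := by linarith
    obtain ⟨t, ht⟩ : ∃ t, t = (m : ℝ) / L ^ 3 := ⟨_, rfl⟩
    have ht0 : 0 < t := by rw [ht]; positivity
    have e1 : -(m : ℝ) / L ^ 2 = -(t * L) := by rw [ht]; field_simp
    have e2 : 7 * m * l / L ^ 3 = 7 * t * l := by rw [ht]; field_simp
    have e3 : (m : ℝ) / L ^ 4 * L = t := by rw [ht]; field_simp
    rw [e1, e2, ← ht]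
    generalize (m : ℝ) / L ^ 4 = z at *
    have e4 : (z - 1) * (1 + L) ≤ 2 * t := by nlinarith
    push_cast
    nlinarith
  refine ⟨⟨1, one_pos, eventually_atTop.1 key⟩, ?_⟩
  have hlim : Tendsto (fun m : ℕ => 1 * Real.exp (-(m : ℝ) / (Real.log m) ^ 2 +
          7 * m * Real.log (Real.log m) / (Real.log m) ^ 3)) atTop (nhds 0) := by
    simp only [one_mul]
    refine Real.tendsto_exp_atBot.comp ?_
    refine tendsto_atBot_mono' _ ?_ (tendsto_neg_atTop_atBot.comp (aux_pow_log 3))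
    have ho := hL.eventually (Real.isLittleO_log_id_atTop.bound (show (0:ℝ) < 1 / 14 by norm_num))
    filter_upwards [eventually_gt_atTop 0, hL.eventually_ge_atTop 2, ho] with m hm h1 h2
    have hm' : (0:ℝ) < m := by exact_mod_cast hm
    have h3 : Real.log (Real.log m) ≤ 1 / 14 * Real.log m := by
      have := (le_abs_self _).trans h2
      simpa [abs_of_nonneg (show 0 ≤ Real.log (m:ℝ) by linarith)] using this
    simp only [Function.comp]
    generalize Real.log (Real.log (m : ℝ)) = l at *
    generalize Real.log (m : ℝ) = L at *
    have hL0 : 0 < L := by linarith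
    obtain ⟨t, ht⟩ : ∃ t, t = (m : ℝ) / L ^ 3 := ⟨_, rfl⟩
    have ht0 : 0 < t := by rw [ht]; positivity
    have e1 : -(m : ℝ) / L ^ 2 = -(t * L) := by rw [ht]; field_simp
    have e2 : 7 * m * l / L ^ 3 = 7 * t * l := by rw [ht]; field_simp
    rw [e1, e2, ← ht]
    nlinarith
  exact squeeze_zero' (Eventually.of_forall fun _ => ENNReal.toReal_nonneg) key hlim
end
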